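/- Let x(t) = Σ_{k=1}^K A_k(t) e^{2πi φ_k(t)} with A_k ∈ C¹(ℝ) ∩ L^∞(ℝ), φ_k ∈ C²(ℝ), A_k(t) > 0, 0 < inf_t φ'_k(t) ≤ sup_t φ'_k(t) < ∞, and suppose |A'_k(t)| ≤ ε₁ φ'_k(t), |φ''_k(t)| ≤ ε₂ φ'_k(t) for all t and k, with M''_k = sup_t |φ''_k(t)| < ∞. Let g, σ, Ṽ_x be as in the context. Then |Ṽ_x(t,η) − Σ_{k=1}^K x_k(t) ĝ(σ(t)(η − φ'_k(t)))| ≤ σ(t) Λ₀(t), where Λ₀(t) = ε₁ Σ_{k=1}^K (I₁ φ'_k(t) + (1/2) M''_k I₂ σ(t)) + π ε₂ σ(t) Σ_{k=1}^K A_k(t) (I₂ φ'_k(t) + (1/3) M''_k I₃ σ(t)) and I_n = ∫_ℝ |τ^n g(τ)| dτ. -/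

import Mathlib

/-!
After the substitution `τ = σ(t) u`, both the adaptive STFT and its approximation become integrals
against `g(u)` with the same modulus-one factor, so the error of the `k`-th component is governed by
`x_k(t+τ) - x_k(t) e^{2πi φ_k'(t) τ}`. This splits into an amplitude error `A_k(t+τ) - A_k(t)` and,
since `θ ↦ e^{2πiθ}` is `2π`-Lipschitz, `2π A_k(t)` times the phase error
`φ_k(t+τ) - φ_k(t) - φ_k'(t) τ`. The growth conditions `|A_k'| ≤ ε₁ φ_k'`, `|φ_k''| ≤ ε₂ φ_k'`,
together with `φ_k'(t+τ) ≤ φ_k'(t) + M_k |τ|`, are integrated once for the amplitude and twice for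
the phase (`abs_sub_le_of_slow`, `phase_bound`). The resulting polynomial bound in `|τ| = σ(t)|u|`
(`component_bound`) turns into the absolute moments of `g` on integration (`component_integral`).
-/


open MeasureTheory Real Set Filter
open scoped Topology Real

noncomputable section

/-- `e2πi θ = exp(2πiθ)`. -/
def e2πi (θ : ℝ) : ℂ := Complex.exp (2 * (π : ℂ) * (θ : ℂ) * Complex.I)

/-- Fourier transform with the convention `ŵ(ξ) = ∫ w(u) e^{-2πiξu} du`. -/
def ft (w : ℝ → ℂ) (ξ : ℝ) : ℂ := ∫ u : ℝ, w u * e2πi (-(ξ * u))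

/-- The adaptive STFT with window `w` and time-varying parameter `σ`. -/
def adSTFT (σ : ℝ → ℝ) (w : ℝ → ℂ) (x : ℝ → ℂ) (t η : ℝ) : ℂ :=
  ∫ τ : ℝ, x (t + τ) * ((σ t : ℂ))⁻¹ * w (τ / σ t) * e2πi (-(η * τ))

/-- Absolute moments `I_n = ∫ |τ^n w(τ)| dτ`. -/
def absMom (w : ℝ → ℂ) (n : ℕ) : ℝ := ∫ τ : ℝ, |τ| ^ n * ‖w τ‖

/-- The window `g₁(u) = u g(u)`. -/
def g1w (g : ℝ → ℂ) : ℝ → ℂ := fun u => (u : ℂ) * g u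

/-- The window `g₂(u) = u² g(u)`. -/
def g2w (g : ℝ → ℂ) : ℝ → ℂ := fun u => (u : ℂ) ^ 2 * g u

/-- The window `g₃(u) = u g'(u)`. -/
def g3w (g : ℝ → ℂ) : ℝ → ℂ := fun u => (u : ℂ) * deriv g u

/-- `∂_t` of the adaptive STFT. -/
def adSTFTt (σ : ℝ → ℝ) (w : ℝ → ℂ) (x : ℝ → ℂ) (t η : ℝ) : ℂ :=
  deriv (fun s => adSTFT σ w x s η) t

/-- `∂_η` of the adaptive STFT. -/
def adSTFTη (σ : ℝ → ℝ) (w : ℝ → ℂ) (x : ℝ → ℂ) (t η : ℝ) : ℂ :=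
  deriv (fun η' => adSTFT σ w x t η') η

/-- The complex phase transformation `ω^{adp,c}` of the adaptive FSST. -/
def omegaC (σ : ℝ → ℝ) (g x : ℝ → ℂ) (t η : ℝ) : ℂ :=
  adSTFTt σ g x t η / (2 * (π : ℂ) * Complex.I * adSTFT σ g x t η)
  + ((deriv σ t : ℝ) : ℂ) / (2 * (π : ℂ) * Complex.I * (σ t : ℂ))
  + ((deriv σ t / σ t : ℝ) : ℂ) * adSTFT σ (g3w g) x t η /
      (2 * (π : ℂ) * Complex.I * adSTFT σ g x t η)

/-- The (real) phase transformation `ω^{adp}` of the adaptive FSST. -/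
def omegaAdp (σ : ℝ → ℝ) (g x : ℝ → ℂ) (t η : ℝ) : ℝ :=
  (adSTFTt σ g x t η / (2 * (π : ℂ) * Complex.I * adSTFT σ g x t η)).re
  + (deriv σ t / σ t) *
      (adSTFT σ (g3w g) x t η / (2 * (π : ℂ) * Complex.I * adSTFT σ g x t η)).re

/-- The quantity `P₀(t,η)` of the second-order adaptive FSST. -/
def P0 (σ : ℝ → ℝ) (g x : ℝ → ℂ) (t η : ℝ) : ℂ :=
  (deriv (fun η' => adSTFTt σ g x t η' / adSTFT σ g x t η') η
    + ((deriv σ t / σ t : ℝ) : ℂ) *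
        deriv (fun η' => adSTFT σ (g3w g) x t η' / adSTFT σ g x t η') η)
  / deriv (fun η' => adSTFT σ (g1w g) x t η' / adSTFT σ g x t η') η

/-- The complex second-order phase transformation `ω^{adp,2nd,c}`. -/
def omega2C (σ : ℝ → ℝ) (g x : ℝ → ℂ) (t η : ℝ) : ℂ :=
  ((deriv σ t : ℝ) : ℂ) / (2 * (π : ℂ) * Complex.I * (σ t : ℂ))
  + adSTFTt σ g x t η / (2 * (π : ℂ) * Complex.I * adSTFT σ g x t η)
  - adSTFT σ (g1w g) x t η / (2 * (π : ℂ) * Complex.I * adSTFT σ g x t η) * P0 σ g x t η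
  + ((deriv σ t / σ t : ℝ) : ℂ) * adSTFT σ (g3w g) x t η /
      (2 * (π : ℂ) * Complex.I * adSTFT σ g x t η)

/-- The (real) second-order phase transformation `ω^{adp,2nd}`. -/
def omega2 (σ : ℝ → ℝ) (g x : ℝ → ℂ) (t η : ℝ) : ℝ := (omega2C σ g x t η).re

/-- The adaptive FSST `R^{adp,λ}_{x,γ}`. -/
def fsst (σ : ℝ → ℝ) (g x : ℝ → ℂ) (h : ℝ → ℝ) (γ lam t ξ : ℝ) : ℂ :=
  ∫ η in {η : ℝ | γ < ‖adSTFT σ g x t η‖},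
    adSTFT σ g x t η * ((lam⁻¹ * h ((ξ - omegaAdp σ g x t η) / lam) : ℝ) : ℂ)

/-- The second-order adaptive FSST `R^{adp,2nd,λ}_{x,γ₁,γ₂}`. -/
def fsst2 (σ : ℝ → ℝ) (g x : ℝ → ℂ) (h : ℝ → ℝ) (γ₁ γ₂ lam t ξ : ℝ) : ℂ :=
  ∫ η in {η : ℝ | γ₁ < ‖adSTFT σ g x t η‖ ∧
      γ₂ < ‖deriv (fun η' => adSTFT σ (g1w g) x t η' / adSTFT σ g x t η') η‖},
    adSTFT σ g x t η * ((lam⁻¹ * h ((ξ - omega2 σ g x t η) / lam) : ℝ) : ℂ)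

/-- The chirp kernel `G^w_ℓ(t,η)` associated with linear phase `a` and chirp rate `b`. -/
def chirpG (σ : ℝ → ℝ) (w : ℝ → ℂ) (a b : ℝ) (t η : ℝ) : ℂ :=
  ∫ τ : ℝ, e2πi (a * τ + b * τ ^ 2 / 2) * ((σ t : ℂ))⁻¹ * w (τ / σ t) * e2πi (-(η * τ))

/-- The Fourier transform of the chirped window `e^{iπru²} w(u)`. -/
def chirpFT (r : ℝ) (w : ℝ → ℂ) (ξ : ℝ) : ℂ :=
  ∫ u : ℝ, e2πi (r * u ^ 2 / 2) * w u * e2πi (-(ξ * u))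

/-- The residual `err^w(t,η) = Ṽ^w_x(t,η) - Σ_ℓ x_ℓ(t) G^w_ℓ(t,η)`. -/
def errW (σ : ℝ → ℝ) (w : ℝ → ℂ) (K : ℕ) (A φ : Fin K → ℝ → ℝ) (x : ℝ → ℂ)
    (t η : ℝ) : ℂ :=
  adSTFT σ w x t η - ∑ ℓ, (A ℓ t : ℂ) * e2πi (φ ℓ t) *
    chirpG σ w (deriv (φ ℓ) t) (deriv (deriv (φ ℓ)) t) t η

/-- The quantity `Err₁` of the second-order analysis. -/
def Err1 (σ : ℝ → ℝ) (g x : ℝ → ℂ) (K : ℕ) (A φ : Fin K → ℝ → ℝ) (k : Fin K)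
    (t η : ℝ) : ℂ :=
  2 * (π : ℂ) * Complex.I *
      (∑ ℓ ∈ Finset.univ.erase k, (A ℓ t : ℂ) * e2πi (φ ℓ t) *
        ((deriv (φ ℓ) t - deriv (φ k) t : ℝ) : ℂ) *
        chirpG σ g (deriv (φ ℓ) t) (deriv (deriv (φ ℓ)) t) t η)
  + 2 * (π : ℂ) * Complex.I * (σ t : ℂ) *
      (∑ ℓ ∈ Finset.univ.erase k, (A ℓ t : ℂ) * e2πi (φ ℓ t) *
        ((deriv (deriv (φ ℓ)) t - deriv (deriv (φ k)) t : ℝ) : ℂ) *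
        chirpG σ (g1w g) (deriv (φ ℓ) t) (deriv (deriv (φ ℓ)) t) t η)
  + 2 * (π : ℂ) * Complex.I * ((η - deriv (φ k) t : ℝ) : ℂ) * errW σ g K A φ x t η
  - errW σ (deriv g) K A φ x t η / (σ t : ℂ)
  - 2 * (π : ℂ) * Complex.I * ((deriv (deriv (φ k)) t : ℝ) : ℂ) * (σ t : ℂ) *
      errW σ (g1w g) K A φ x t η

/-- The quantity `Err₂` of the second-order analysis. -/
def Err2 (σ : ℝ → ℝ) (g x : ℝ → ℂ) (K : ℕ) (A φ : Fin K → ℝ → ℝ) (k : Fin K)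
    (t η : ℝ) : ℂ :=
  4 * (π : ℂ) ^ 2 * (σ t : ℂ) *
      (∑ ℓ ∈ Finset.univ.erase k, (A ℓ t : ℂ) * e2πi (φ ℓ t) *
        ((deriv (φ ℓ) t - deriv (φ k) t : ℝ) : ℂ) *
        chirpG σ (g1w g) (deriv (φ ℓ) t) (deriv (deriv (φ ℓ)) t) t η)
  + 4 * (π : ℂ) ^ 2 * (σ t : ℂ) ^ 2 *
      (∑ ℓ ∈ Finset.univ.erase k, (A ℓ t : ℂ) * e2πi (φ ℓ t) *
        ((deriv (deriv (φ ℓ)) t - deriv (deriv (φ k)) t : ℝ) : ℂ) *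
        chirpG σ (g2w g) (deriv (φ ℓ) t) (deriv (deriv (φ ℓ)) t) t η)
  + 2 * (π : ℂ) * Complex.I * errW σ g K A φ x t η
  + 4 * (π : ℂ) ^ 2 * ((η - deriv (φ k) t : ℝ) : ℂ) * (σ t : ℂ) * errW σ (g1w g) K A φ x t η
  + 2 * (π : ℂ) * Complex.I * errW σ (g3w g) K A φ x t η
  - 4 * (π : ℂ) ^ 2 * ((deriv (deriv (φ k)) t : ℝ) : ℂ) * (σ t : ℂ) ^ 2 *
      errW σ (g2w g) K A φ x t η

/-- The quantity `Err₃` of the second-order analysis. -/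
def Err3 (σ : ℝ → ℝ) (g x : ℝ → ℂ) (K : ℕ) (A φ : Fin K → ℝ → ℝ) (k : Fin K)
    (t η : ℝ) : ℂ :=
  (adSTFT σ g x t η * Err2 σ g x K A φ k t η
    - adSTFTη σ g x t η * Err1 σ g x K A φ k t η)
  / (adSTFT σ g x t η * adSTFTη σ (g1w g) x t η
    - adSTFT σ (g1w g) x t η * adSTFTη σ g x t η)

lemma norm_e2πi (θ : ℝ) : ‖e2πi θ‖ = 1 := by
  have h : (2 * (π : ℂ) * (θ : ℂ) * Complex.I) = ((2 * π * θ : ℝ) : ℂ) * Complex.I := by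
    push_cast; ring
  rw [e2πi, h, Complex.norm_exp_ofReal_mul_I]

lemma e2πi_add (a b : ℝ) : e2πi (a + b) = e2πi a * e2πi b := by
  rw [e2πi, e2πi, e2πi, ← Complex.exp_add]
  congr 1; push_cast; ring

lemma continuous_e2πi : Continuous e2πi := by
  unfold e2πi; fun_prop

lemma norm_e2πi_sub_le (a b : ℝ) : ‖e2πi a - e2πi b‖ ≤ 2 * π * |a - b| := by
  have h1 : e2πi a - e2πi b = e2πi b * (e2πi (a - b) - 1) := by
    rw [mul_sub, ← e2πi_add]; simp
  have h2 : e2πi (a - b) = Complex.exp (Complex.I * ((2 * π * (a - b) : ℝ) : ℂ)) := by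
    rw [e2πi]; congr 1; push_cast; ring
  rw [h1, norm_mul, norm_e2πi, one_mul, h2]
  refine Real.norm_exp_I_mul_ofReal_sub_one_le.trans (le_of_eq ?_)
  rw [Real.norm_eq_abs, abs_mul, abs_of_pos (by positivity : (0 : ℝ) < 2 * π)]

/-- Two-sided fencing: a bound `|f'(s)| ≤ b(|s|)` integrates to `|f(τ)| ≤ B(|τ|)`, where
`B' = b` and `f(0) = B(0) = 0`. -/
lemma abs_le_of_deriv_le {f f' B b : ℝ → ℝ} (hf : ∀ s, HasDerivAt f (f' s) s) (hf0 : f 0 = 0)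
    (hB : ∀ s, HasDerivAt B (b s) s) (hB0 : B 0 = 0) (h : ∀ s, |f' s| ≤ b |s|) (τ : ℝ) :
    |f τ| ≤ B |τ| := by
  -- The half-line `τ ≤ 0` is reduced to `τ ≥ 0` by reflecting `f`.
  have key : ∀ (f f' : ℝ → ℝ), (∀ s, HasDerivAt f (f' s) s) → f 0 = 0 → (∀ s, |f' s| ≤ b |s|) →
      ∀ τ, 0 ≤ τ → |f τ| ≤ B τ := by
    intro f f' hf hf0 h τ hτ
    refine image_norm_le_of_norm_deriv_right_le_deriv_boundary (a := 0) (b := τ) (f := f)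
      (f' := f') (fun x _ => (hf x).continuousAt.continuousWithinAt)
      (fun x _ => (hf x).hasDerivWithinAt) (by simp [hf0, hB0]) hB ?_ ⟨hτ, le_rfl⟩
    intro x hx
    have := h x
    rwa [abs_of_nonneg hx.1] at this
  rcases le_total 0 τ with hτ | hτ
  · rw [abs_of_nonneg hτ]; exact key f f' hf hf0 h τ hτ
  · rw [abs_of_nonpos hτ]
    have := key (fun s => f (-s)) (fun s => -f' (-s))
      (fun s => ((hf (-s)).comp s (hasDerivAt_neg s)).congr_deriv (by ring))
      (by simp [hf0]) (fun s => by simpa using h (-s)) (-τ) (by linarith)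
    simpa using this

/-- Increment of a function whose derivative is dominated by `ε p`, with `p` an `M`-Lipschitz
function. Used for `F = A_k` and for `F = p = φ_k'`. -/
lemma abs_sub_le_of_slow {F p : ℝ → ℝ} {ε M : ℝ} (hF : Differentiable ℝ F)
    (hp : Differentiable ℝ p) (hε : 0 ≤ ε) (hM : ∀ s, |deriv p s| ≤ M)
    (hFp : ∀ s, |deriv F s| ≤ ε * p s) (t τ : ℝ) :
    |F (t + τ) - F t| ≤ ε * (p t * |τ| + M / 2 * |τ| ^ 2) := by
  have hlip : ∀ s, p (t + s) ≤ p t + M * |s| := by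
    intro s
    have := convex_univ.norm_image_sub_le_of_norm_deriv_le (f := p) (C := M) (x := t) (y := t + s)
      (fun x _ => hp x) (fun x _ => hM x) (mem_univ _) (mem_univ _)
    rw [Real.norm_eq_abs, Real.norm_eq_abs, add_sub_cancel_left] at this
    linarith [le_abs_self (p (t + s) - p t)]
  refine abs_le_of_deriv_le (f := fun s => F (t + s) - F t) (f' := fun s => deriv F (t + s))
    (B := fun s => ε * (p t * s + M / 2 * s ^ 2)) (b := fun s => ε * (p t + M * s))
    ?_ (by simp) ?_ (by simp) ?_ τ
  · intro s
    exact ((hF (t + s)).hasDerivAt.comp_const_add t s).sub_const _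
  · intro s
    have := (((hasDerivAt_id' s).const_mul (p t)).add
      (((hasDerivAt_id' s).pow 2).const_mul (M / 2))).const_mul ε
    exact this.congr_deriv (by push_cast; ring)
  · intro s
    exact (hFp _).trans (mul_le_mul_of_nonneg_left (hlip s) hε)

/-- First-order Taylor remainder of the phase. -/
lemma phase_bound {φ : ℝ → ℝ} {ε M : ℝ} (hφ : Differentiable ℝ φ)
    (hφ' : Differentiable ℝ (deriv φ)) (hε : 0 ≤ ε) (hM : ∀ s, |deriv (deriv φ) s| ≤ M)
    (h : ∀ s, |deriv (deriv φ) s| ≤ ε * deriv φ s) (t τ : ℝ) :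
    |φ (t + τ) - (φ t + deriv φ t * τ)| ≤ ε * (deriv φ t / 2 * |τ| ^ 2 + M / 6 * |τ| ^ 3) := by
  refine abs_le_of_deriv_le (f := fun s => φ (t + s) - (φ t + deriv φ t * s))
    (f' := fun s => deriv φ (t + s) - deriv φ t)
    (B := fun s => ε * (deriv φ t / 2 * s ^ 2 + M / 6 * s ^ 3))
    (b := fun s => ε * (deriv φ t * s + M / 2 * s ^ 2))
    ?_ (by simp) ?_ (by simp) (abs_sub_le_of_slow hφ' hφ' hε hM h t) τ
  · intro s
    have := ((hφ (t + s)).hasDerivAt.comp_const_add t s).sub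
      (((hasDerivAt_id' s).const_mul (deriv φ t)).const_add (φ t))
    exact this.congr_deriv (by ring)
  · intro s
    have := ((((hasDerivAt_id' s).pow 2).const_mul (deriv φ t / 2)).add
      (((hasDerivAt_id' s).pow 3).const_mul (M / 6))).const_mul ε
    exact this.congr_deriv (by push_cast; ring)

/-- Pointwise error of replacing a component by a pure tone of frequency `φ'(t)`. -/
lemma component_bound {A φ : ℝ → ℝ} {ε₁ ε₂ M : ℝ} (hA : Differentiable ℝ A)
    (hφ : Differentiable ℝ φ) (hφ' : Differentiable ℝ (deriv φ)) (hε₁ : 0 ≤ ε₁) (hε₂ : 0 ≤ ε₂)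
    (hApos : ∀ s, 0 < A s) (hM : ∀ s, |deriv (deriv φ) s| ≤ M)
    (h1 : ∀ s, |deriv A s| ≤ ε₁ * deriv φ s)
    (h2 : ∀ s, |deriv (deriv φ) s| ≤ ε₂ * deriv φ s) (t τ : ℝ) :
    ‖(A (t + τ) : ℂ) * e2πi (φ (t + τ)) - (A t : ℂ) * e2πi (φ t) * e2πi (deriv φ t * τ)‖
      ≤ ε₁ * (deriv φ t * |τ| + M / 2 * |τ| ^ 2)
        + π * ε₂ * A t * (deriv φ t * |τ| ^ 2 + M / 3 * |τ| ^ 3) := by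
  have e : (A (t + τ) : ℂ) * e2πi (φ (t + τ)) - (A t : ℂ) * e2πi (φ t) * e2πi (deriv φ t * τ)
      = ((A (t + τ) - A t : ℝ) : ℂ) * e2πi (φ (t + τ))
        + (A t : ℂ) * (e2πi (φ (t + τ)) - e2πi (φ t + deriv φ t * τ)) := by
    rw [e2πi_add]; push_cast; ring
  rw [e]
  refine (norm_add_le _ _).trans (add_le_add ?_ ?_)
  · rw [norm_mul, norm_e2πi, mul_one, Complex.norm_real, Real.norm_eq_abs]
    exact abs_sub_le_of_slow hA hφ' hε₁ hM h1 t τ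
  · rw [norm_mul, Complex.norm_real, Real.norm_eq_abs, abs_of_pos (hApos t)]
    calc A t * ‖e2πi (φ (t + τ)) - e2πi (φ t + deriv φ t * τ)‖
        ≤ A t * (2 * π * (ε₂ * (deriv φ t / 2 * |τ| ^ 2 + M / 6 * |τ| ^ 3))) := by
          refine mul_le_mul_of_nonneg_left ((norm_e2πi_sub_le _ _).trans ?_) (hApos t).le
          exact mul_le_mul_of_nonneg_left (phase_bound hφ hφ' hε₂ hM h2 t τ) (by positivity)
      _ = _ := by ring

/-- Error contributed by one component, in the rescaled variable `u = τ / s`, where `s` stands for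
`σ(t)`. -/
lemma component_integral {A φ : ℝ → ℝ} {ε₁ ε₂ M : ℝ} (hA : Differentiable ℝ A)
    (hAbdd : ∃ C, ∀ s, |A s| ≤ C)
    (hφ : Differentiable ℝ φ) (hφ' : Differentiable ℝ (deriv φ)) (hε₁ : 0 ≤ ε₁) (hε₂ : 0 ≤ ε₂)
    (hApos : ∀ s, 0 < A s) (hM : ∀ s, |deriv (deriv φ) s| ≤ M)
    (h1 : ∀ s, |deriv A s| ≤ ε₁ * deriv φ s)
    (h2 : ∀ s, |deriv (deriv φ) s| ≤ ε₂ * deriv φ s) (g : SchwartzMap ℝ ℂ) (t η : ℝ) {s : ℝ}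
    (hs : 0 < s) :
    Integrable (fun u : ℝ =>
      (A (t + s * u) : ℂ) * e2πi (φ (t + s * u)) * g u * e2πi (-(η * (s * u)))) ∧
    ‖(∫ u : ℝ, (A (t + s * u) : ℂ) * e2πi (φ (t + s * u)) * g u * e2πi (-(η * (s * u))))
        - (A t : ℂ) * e2πi (φ t) * ft (⇑g) (s * (η - deriv φ t))‖
      ≤ s * (ε₁ * (absMom (⇑g) 1 * deriv φ t + (1 / 2) * M * absMom (⇑g) 2 * s)
        + π * ε₂ * s * (A t * (absMom (⇑g) 2 * deriv φ t
          + (1 / 3) * M * absMom (⇑g) 3 * s))) := by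
  have hAc := hA.continuous
  have hφc := hφ.continuous
  have hgc : Continuous (⇑g) := g.continuous
  have hec := continuous_e2πi
  have hI1 : Integrable (fun u : ℝ =>
      (A (t + s * u) : ℂ) * e2πi (φ (t + s * u)) * g u * e2πi (-(η * (s * u)))) := by
    obtain ⟨C, hC⟩ := hAbdd
    refine (g.integrable.norm.const_mul C).mono'
      (Continuous.aestronglyMeasurable (by fun_prop)) (Eventually.of_forall fun u => ?_)
    simp only [norm_mul, norm_e2πi, mul_one, Complex.norm_real, Real.norm_eq_abs]
    exact mul_le_mul_of_nonneg_right (hC _) (norm_nonneg _)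
  have hI2 : Integrable (fun u : ℝ => g u * e2πi (-(s * (η - deriv φ t) * u))) := by
    refine g.integrable.norm.mono'
      (Continuous.aestronglyMeasurable (by fun_prop)) (Eventually.of_forall fun u => ?_)
    simp [norm_e2πi]
  have hm : ∀ n : ℕ, Integrable (fun u : ℝ => |u| ^ n * ‖g u‖) := fun n => by
    simpa using g.integrable_pow_mul volume n
  refine ⟨hI1, ?_⟩
  rw [ft, ← integral_const_mul, ← integral_sub hI1 (hI2.const_mul _)]
  calc _ ≤ ∫ u : ℝ, (ε₁ * deriv φ t * s * (|u| ^ 1 * ‖g u‖)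
          + (ε₁ * (M / 2) * s ^ 2 + π * ε₂ * A t * deriv φ t * s ^ 2) * (|u| ^ 2 * ‖g u‖)
          + π * ε₂ * A t * (M / 3) * s ^ 3 * (|u| ^ 3 * ‖g u‖)) := by
        refine norm_integral_le_of_norm_le
          ((((hm 1).const_mul _).add ((hm 2).const_mul _)).add ((hm 3).const_mul _))
          (Eventually.of_forall fun u => ?_)
        have e1 : e2πi (-(s * (η - deriv φ t) * u))
            = e2πi (deriv φ t * (s * u)) * e2πi (-(η * (s * u))) := by
          rw [← e2πi_add]; congr 1; ring
        have e2 : (A (t + s * u) : ℂ) * e2πi (φ (t + s * u)) * g u * e2πi (-(η * (s * u)))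
            - (A t : ℂ) * e2πi (φ t) * (g u * e2πi (-(s * (η - deriv φ t) * u)))
            = ((A (t + s * u) : ℂ) * e2πi (φ (t + s * u))
              - (A t : ℂ) * e2πi (φ t) * e2πi (deriv φ t * (s * u))) * g u
                * e2πi (-(η * (s * u))) := by
          rw [e1]; ring
        rw [e2, norm_mul, norm_mul, norm_e2πi, mul_one]
        refine (mul_le_mul_of_nonneg_right (component_bound hA hφ hφ' hε₁ hε₂ hApos hM h1 h2 t
          (s * u)) (norm_nonneg _)).trans (le_of_eq ?_)
        rw [abs_mul, abs_of_pos hs]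
        ring
    _ = _ := by
        rw [integral_add (by exact ((hm 1).const_mul _).add ((hm 2).const_mul _))
            ((hm 3).const_mul _),
          integral_add ((hm 1).const_mul _) ((hm 2).const_mul _), integral_const_mul,
          integral_const_mul, integral_const_mul]
        simp only [absMom]
        ring

/-- The substitution `τ = σ(t) u`. -/
lemma adSTFT_eq_rescaled (σ : ℝ → ℝ) (w x : ℝ → ℂ) (t η : ℝ) (hσ : 0 < σ t) :
    adSTFT σ w x t η = ∫ u : ℝ, x (t + σ t * u) * w u * e2πi (-(η * (σ t * u))) := by
  have hne : (σ t : ℂ) ≠ 0 := by exact_mod_cast hσ.ne'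
  have h := Measure.integral_comp_mul_left
    (fun τ : ℝ => x (t + τ) * w (τ / σ t) * e2πi (-(η * τ))) (σ t)
  simp only [mul_div_cancel_left₀ _ hσ.ne'] at h
  rw [h, abs_of_pos (inv_pos.2 hσ), ← integral_smul, adSTFT]
  refine integral_congr_ae (Eventually.of_forall fun τ => ?_)
  simp only [Complex.real_smul, Complex.ofReal_inv]
  ring

theorem statement6
    (K : ℕ) (hK : 0 < K)
    (A φ : Fin K → ℝ → ℝ) (ε₁ ε₂ : ℝ) (hε₁ : 0 < ε₁) (hε₂pos : 0 < ε₂)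
    (hA1 : ∀ k, ContDiff ℝ 1 (A k))
    (hAbdd : ∀ k, ∃ C, ∀ s, |A k s| ≤ C)
    (hφ2 : ∀ k, ContDiff ℝ 2 (φ k))
    (hApos : ∀ k s, 0 < A k s)
    (hφ'bd : ∀ k, ∃ c C : ℝ, 0 < c ∧ (∀ s, c ≤ deriv (φ k) s) ∧ ∀ s, deriv (φ k) s ≤ C)
    (hA' : ∀ k s, |deriv (A k) s| ≤ ε₁ * deriv (φ k) s)
    (hφ'' : ∀ k s, |deriv (deriv (φ k)) s| ≤ ε₂ * deriv (φ k) s)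
    (M : Fin K → ℝ)
    (hMbdd : ∀ k, BddAbove (Set.range fun s => |deriv (deriv (φ k)) s|))
    (hM : ∀ k, M k = ⨆ s : ℝ, |deriv (deriv (φ k)) s|)
    (g : SchwartzMap ℝ ℂ) (hg0 : g 0 ≠ 0)
    (σ : ℝ → ℝ) (hσ : ContDiff ℝ 1 σ) (hσpos : ∀ s, 0 < σ s)
    (x : ℝ → ℂ) (hx : ∀ s, x s = ∑ k, (A k s : ℂ) * e2πi (φ k s))
    (Λ₀ : ℝ → ℝ)
    (hΛ₀ : ∀ s, Λ₀ s = ε₁ * (∑ k, (absMom (⇑g) 1 * deriv (φ k) s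
        + (1 / 2) * M k * absMom (⇑g) 2 * σ s))
      + π * ε₂ * σ s * ∑ k, A k s * (absMom (⇑g) 2 * deriv (φ k) s
        + (1 / 3) * M k * absMom (⇑g) 3 * σ s)) :
    ∀ (t η : ℝ),
      ‖adSTFT σ (⇑g) x t η -
        ∑ k, (A k t : ℂ) * e2πi (φ k t) * ft (⇑g) (σ t * (η - deriv (φ k) t))‖
      ≤ σ t * Λ₀ t := by
  intro t η
  have hMle : ∀ k s, |deriv (deriv (φ k)) s| ≤ M k := fun k s => by
    rw [hM k]; exact le_ciSup (hMbdd k) s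
  have hφd : ∀ k, Differentiable ℝ (φ k) := fun k => (hφ2 k).differentiable (by norm_num)
  have hφ'd : ∀ k, Differentiable ℝ (deriv (φ k)) := fun k =>
    (ContDiff.deriv' (n := 1) (by simpa [one_add_one_eq_two] using hφ2 k)).differentiable
      (by norm_num)
  have main := fun k => component_integral ((hA1 k).differentiable (by norm_num)) (hAbdd k)
    (hφd k) (hφ'd k) hε₁.le hε₂pos.le (hApos k) (hMle k) (hA' k) (hφ'' k) g t η (hσpos t)
  rw [adSTFT_eq_rescaled _ _ _ _ _ (hσpos t)]
  simp only [hx, Finset.sum_mul]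
  rw [integral_finsetSum _ (fun k _ => (main k).1), ← Finset.sum_sub_distrib]
  refine (norm_sum_le _ _).trans ((Finset.sum_le_sum fun k _ => (main k).2).trans (le_of_eq ?_))
  rw [hΛ₀, ← Finset.mul_sum, Finset.sum_add_distrib, ← Finset.mul_sum, ← Finset.mul_sum]

end
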